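/- Let κ > 0 and 0 < R' < R. Then lim_{n → ∞} [∫_{R'}^{R} W_n(R', t) dt] / [ (−2i/((2n+1)·(n+1)·κ))·(R/R')^{n+1} ] = 1, i.e. ∫_{R'}^{R} W_n(R', t) dt is asymptotically equal to −(2i/((2n+1)(n+1)κ))·(R/R')^{n+1} as n → ∞. -/

import Mathlib

/-!
Write `W_n(R', t) = -2i / (κ R') * v(t) / t`. Up to constant factors, `x h_n^{(1)}(x)` and
`x h_n^{(2)}(x)` solve the Riccati–Bessel equation `f'' = (n(n+1)/x² - 1) f`, which amounts to a
two-term recurrence for the Rayleigh coefficients (`hkP_ode`), and their Wronskian is `-2i`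
(`hkF_wronskian`). Hence `v` is the real solution of

  `v'' = (n(n+1)/t² - κ²) v`, `v(R') = 0`, `v'(R') = 1`

(`exists_real_solution`). Once `n(n+1) ≥ κ²R²`, the solution is nonnegative on `[R', R]`, and
comparing it through a Wronskian with `t ^ (n+1)`, a solution for `κ = 0`, gives (`solution_bounds`)

  `v(t) = t ^ (n+1) / ((2n+1) R' ^ n) * (1 + O((R'/t) ^ (2n+1)) + O(1/n))`

with explicit one-sided constants. Integrating `v(t) / t` over `[R', R]` leaves
`R ^ (n+1) / ((2n+1)(n+1) R' ^ n)` up to a relative error that is `O(1/n)` or exponentially small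
(`integral_bounds`).
-/

/-- Spherical Hankel function of the first kind, via the Rayleigh formula. -/
noncomputable def sphH1 (n : ℕ) (z : ℂ) : ℂ :=
  (-Complex.I) ^ (n + 1) * (Complex.exp (Complex.I * z) / z) *
    ∑ m ∈ Finset.range (n + 1),
      Complex.I ^ m * ((Nat.factorial (n + m) : ℂ) /
        ((Nat.factorial m : ℂ) * (Nat.factorial (n - m) : ℂ) * (2 * z) ^ m))

/-- Spherical Hankel function of the second kind, via the Rayleigh formula. -/
noncomputable def sphH2 (n : ℕ) (z : ℂ) : ℂ :=
  Complex.I ^ (n + 1) * (Complex.exp (-Complex.I * z) / z) *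
    ∑ m ∈ Finset.range (n + 1),
      (-Complex.I) ^ m * ((Nat.factorial (n + m) : ℂ) /
        ((Nat.factorial m : ℂ) * (Nat.factorial (n - m) : ℂ) * (2 * z) ^ m))

/-- `z_n^{(1)}(t) = t·h_n^{(1)′}(t)/h_n^{(1)}(t)`. -/
noncomputable def zH1 (n : ℕ) (t : ℝ) : ℂ :=
  (t : ℂ) * deriv (sphH1 n) (t : ℂ) / sphH1 n (t : ℂ)

/-- `z_n^{(2)}(t) = t·h_n^{(2)′}(t)/h_n^{(2)}(t)`. -/
noncomputable def zH2 (n : ℕ) (t : ℝ) : ℂ :=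
  (t : ℂ) * deriv (sphH2 n) (t : ℂ) / sphH2 n (t : ℂ)

/-- `S_n(ρ) = h_n^{(2)}(κρ)/h_n^{(2)}(κR')`. -/
noncomputable def Sfun (κ R' : ℝ) (n : ℕ) (ρ : ℝ) : ℂ :=
  sphH2 n ((κ * ρ : ℝ) : ℂ) / sphH2 n ((κ * R' : ℝ) : ℂ)

/-- `W_n(ρ, t) = h_n^{(1)}(κρ)·h_n^{(2)}(κt) − h_n^{(2)}(κρ)·h_n^{(1)}(κt)`. -/
noncomputable def Wfun (κ : ℝ) (n : ℕ) (ρ t : ℝ) : ℂ :=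
  sphH1 n ((κ * ρ : ℝ) : ℂ) * sphH2 n ((κ * t : ℝ) : ℂ)
    - sphH2 n ((κ * ρ : ℝ) : ℂ) * sphH1 n ((κ * t : ℝ) : ℂ)

open Finset Filter Topology

/-! ### Riccati–Hankel functions and their differential equation -/

/-- The coefficient of `y ^ m` in `hkP σ n y`; see there. -/
noncomputable def hkCoeff (σ : ℂ) (n m : ℕ) : ℂ :=
  σ ^ m * ((Nat.factorial (n + m) : ℂ) /
    ((Nat.factorial m : ℂ) * (Nat.factorial (n - m) : ℂ))) / 2 ^ m

/-- The Rayleigh polynomial, in the variable `y = 1 / x`: with `σ = ± i`, the function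
`exp (σ x) * hkP σ n (1 / x)` is, up to a constant factor, `x` times a spherical Hankel function. -/
noncomputable def hkP (σ : ℂ) (n : ℕ) (y : ℂ) : ℂ :=
  ∑ m ∈ range (n + 1), hkCoeff σ n m * y ^ m

/-- The derivative in `x` of `hkP σ n (1 / x)`, as a polynomial in `y = 1 / x`. -/
noncomputable def hkP' (σ : ℂ) (n : ℕ) (y : ℂ) : ℂ :=
  ∑ m ∈ range (n + 1), hkCoeff σ n m * (-(m : ℂ) * y ^ (m + 1))

/-- The second derivative in `x` of `hkP σ n (1 / x)`, as a polynomial in `y = 1 / x`. -/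
noncomputable def hkP'' (σ : ℂ) (n : ℕ) (y : ℂ) : ℂ :=
  ∑ m ∈ range (n + 1), hkCoeff σ n m * ((m : ℂ) * (m + 1) * y ^ (m + 2))

/-- The Riccati–Hankel function `exp (σ x) * hkP σ n (1 / x)` on the real line, for `σ = ± i`. -/
noncomputable def hkF (σ : ℂ) (n : ℕ) (x : ℝ) : ℂ :=
  Complex.exp (σ * x) * hkP σ n (x : ℂ)⁻¹

/-- The derivative of `hkF`. -/
noncomputable def hkF' (σ : ℂ) (n : ℕ) (x : ℝ) : ℂ :=
  Complex.exp (σ * x) * (σ * hkP σ n (x : ℂ)⁻¹ + hkP' σ n (x : ℂ)⁻¹)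

lemma hkCoeff_succ (σ : ℂ) {n m : ℕ} (h : m < n) :
    2 * (m + 1) * hkCoeff σ n (m + 1) = σ * ((n + m + 1) * (n - m)) * hkCoeff σ n m := by
  obtain ⟨k, rfl⟩ : ∃ k, n = m + 1 + k := ⟨n - (m + 1), by omega⟩
  have h1 : m + 1 + k - (m + 1) = k := by omega
  have h2 : m + 1 + k - m = k + 1 := by omega
  have h3 : m + 1 + k + (m + 1) = (m + 1 + k + m) + 1 := by omega
  simp only [hkCoeff, h1, h2]
  rw [h3, Nat.factorial_succ (m + 1 + k + m), Nat.factorial_succ m, Nat.factorial_succ k]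
  have f1 : ((m.factorial : ℕ) : ℂ) ≠ 0 := by exact_mod_cast m.factorial_ne_zero
  have f2 : ((k.factorial : ℕ) : ℂ) ≠ 0 := by exact_mod_cast k.factorial_ne_zero
  have f3 : (m : ℂ) + 1 ≠ 0 := by exact_mod_cast m.succ_ne_zero
  have f4 : (k : ℂ) + 1 ≠ 0 := by exact_mod_cast k.succ_ne_zero
  push_cast
  field_simp
  ring

/-- The differential equation satisfied by the Rayleigh polynomial, equivalent to the recurrence
`hkCoeff_succ` for its coefficients. -/
lemma hkP_ode {σ : ℂ} (hσ : σ ^ 2 = -1) (n : ℕ) (y : ℂ) :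
    hkP'' σ n y + 2 * σ * hkP' σ n y = n * (n + 1) * y ^ 2 * hkP σ n y := by
  have key : 2 * σ * hkP' σ n y =
      ∑ m ∈ range (n + 1), ((n : ℂ) * (n + 1) - m * (m + 1)) * hkCoeff σ n m * y ^ (m + 2) := by
    rw [hkP', sum_range_succ', sum_range_succ]
    simp only [Nat.cast_zero, neg_zero, zero_mul, mul_zero, add_zero, sub_self, mul_sum]
    refine sum_congr rfl fun m hm => ?_
    have := hkCoeff_succ σ (mem_range.1 hm)
    push_cast
    linear_combination (-σ * y ^ (m + 2)) * this -
      ((n + m + 1) * (n - m)) * hkCoeff σ n m * y ^ (m + 2) * hσ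
  rw [key, hkP'', hkP, ← sum_add_distrib, mul_sum]
  refine sum_congr rfl fun m _ => ?_
  ring

lemma hasDerivAt_inv_pow_ofReal (m : ℕ) {x : ℝ} (hx : x ≠ 0) :
    HasDerivAt (fun x : ℝ => ((x : ℂ)⁻¹) ^ m) (-(m : ℂ) * ((x : ℂ)⁻¹) ^ (m + 1)) x := by
  have hx' : (x : ℂ) ≠ 0 := by exact_mod_cast hx
  have h := ((hasDerivAt_inv hx').comp_ofReal).pow m
  convert! h using 1
  rcases m with _ | m
  · simp
  · simp only [Nat.add_sub_cancel, ← inv_pow]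
    push_cast
    ring

lemma hasDerivAt_hkP (σ : ℂ) (n : ℕ) {x : ℝ} (hx : x ≠ 0) :
    HasDerivAt (fun x : ℝ => hkP σ n (x : ℂ)⁻¹) (hkP' σ n (x : ℂ)⁻¹) x := by
  unfold hkP hkP'
  exact HasDerivAt.fun_sum fun m _ => (hasDerivAt_inv_pow_ofReal m hx).const_mul _

lemma hasDerivAt_hkP' (σ : ℂ) (n : ℕ) {x : ℝ} (hx : x ≠ 0) :
    HasDerivAt (fun x : ℝ => hkP' σ n (x : ℂ)⁻¹) (hkP'' σ n (x : ℂ)⁻¹) x := by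
  unfold hkP' hkP''
  refine HasDerivAt.fun_sum fun m _ => ?_
  convert! ((hasDerivAt_inv_pow_ofReal (m + 1) hx).const_mul (-(m : ℂ))).const_mul _ using 1
  push_cast
  ring

lemma hasDerivAt_exp_mul_ofReal (σ : ℂ) (x : ℝ) :
    HasDerivAt (fun x : ℝ => Complex.exp (σ * x)) (σ * Complex.exp (σ * x)) x := by
  have h := ((hasDerivAt_id (x : ℂ)).const_mul σ).cexp.comp_ofReal
  convert! h using 1
  simp [mul_comm]

lemma hasDerivAt_hkF (σ : ℂ) (n : ℕ) {x : ℝ} (hx : x ≠ 0) :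
    HasDerivAt (hkF σ n) (hkF' σ n x) x := by
  convert! (hasDerivAt_exp_mul_ofReal σ x).mul (hasDerivAt_hkP σ n hx) using 1
  rw [hkF']
  ring

lemma hasDerivAt_hkF' {σ : ℂ} (hσ : σ ^ 2 = -1) (n : ℕ) {x : ℝ} (hx : x ≠ 0) :
    HasDerivAt (hkF' σ n) (((n * (n + 1) / x ^ 2 - 1 : ℝ) : ℂ) * hkF σ n x) x := by
  convert! (hasDerivAt_exp_mul_ofReal σ x).mul
    (((hasDerivAt_hkP σ n hx).const_mul σ).add (hasDerivAt_hkP' σ n hx)) using 1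
  have := hkP_ode hσ n (x : ℂ)⁻¹
  rw [hkF]
  push_cast
  rw [div_eq_mul_inv, ← inv_pow]
  simp only [Pi.add_apply]
  linear_combination (-Complex.exp (σ * x)) * this -
    Complex.exp (σ * x) * hkP σ n (x : ℂ)⁻¹ * hσ

lemma conj_hkCoeff (σ : ℂ) (n m : ℕ) :
    (starRingEnd ℂ) (hkCoeff σ n m) = hkCoeff ((starRingEnd ℂ) σ) n m := by
  simp [hkCoeff, Complex.conj_ofNat]

lemma conj_hkF (n : ℕ) (x : ℝ) :
    (starRingEnd ℂ) (hkF Complex.I n x) = hkF (-Complex.I) n x := by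
  simp [hkF, hkP, conj_hkCoeff, ← Complex.exp_conj]

/-- The Wronskian of the two Riccati–Hankel functions. It is constant by the differential equation,
and its value is read off as `x → ∞`, where the Rayleigh polynomials tend to `1`. -/
lemma hkF_wronskian (n : ℕ) {x : ℝ} (hx : 0 < x) :
    hkF Complex.I n x * hkF' (-Complex.I) n x - hkF (-Complex.I) n x * hkF' Complex.I n x
      = -2 * Complex.I := by
  set w : ℝ → ℂ := fun x =>
    hkF Complex.I n x * hkF' (-Complex.I) n x - hkF (-Complex.I) n x * hkF' Complex.I n x with hw
  have hd : ∀ t : ℝ, 0 < t → HasDerivAt w 0 t := by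
    intro t ht
    have i1 : Complex.I ^ 2 = -1 := Complex.I_sq
    have i2 : (-Complex.I) ^ 2 = -1 := by rw [neg_sq, i1]
    convert! ((hasDerivAt_hkF Complex.I n ht.ne').mul (hasDerivAt_hkF' i2 n ht.ne')).sub
      ((hasDerivAt_hkF (-Complex.I) n ht.ne').mul (hasDerivAt_hkF' i1 n ht.ne')) using 1
    ring
  have hconst : ∀ t, x ≤ t → w t = w x := by
    intro t ht
    refine constant_of_has_deriv_right_zero (a := x) (b := t) (fun s hs => ?_) (fun s hs => ?_) t
      ⟨ht, le_rfl⟩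
    · exact (hd s (hx.trans_le hs.1)).continuousAt.continuousWithinAt
    · exact (hd s (hx.trans_le hs.1)).hasDerivWithinAt
  set p : ℂ → ℂ := fun y =>
    hkP Complex.I n y * (-Complex.I * hkP (-Complex.I) n y + hkP' (-Complex.I) n y) -
      hkP (-Complex.I) n y * (Complex.I * hkP Complex.I n y + hkP' Complex.I n y) with hp
  have hwp : ∀ t : ℝ, w t = p (t : ℂ)⁻¹ := by
    intro t
    have he : Complex.exp (Complex.I * t) * Complex.exp (-Complex.I * t) = 1 := by
      rw [← Complex.exp_add]; simp
    simp only [hw, hp, hkF, hkF']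
    linear_combination (p (t : ℂ)⁻¹) * he
  have hcont : Continuous p := by
    simp only [hp, hkP, hkP']
    fun_prop
  have hp0 : p 0 = -2 * Complex.I := by
    have hP : ∀ σ, hkP σ n 0 = 1 := by
      intro σ
      have : ((n.factorial : ℕ) : ℂ) ≠ 0 := by exact_mod_cast n.factorial_ne_zero
      simp [hkP, sum_range_succ', hkCoeff, this]
    have hP' : ∀ σ, hkP' σ n 0 = 0 := by
      intro σ
      simp [hkP']
    simp only [hp, hP, hP']
    ring
  have hinv : Tendsto (fun t : ℝ => (t : ℂ)⁻¹) atTop (𝓝 0) := by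
    have := (Complex.continuous_ofReal.tendsto 0).comp tendsto_inv_atTop_zero
    simpa [Function.comp_def] using this
  have h1 : Tendsto w atTop (𝓝 (-2 * Complex.I)) := by
    rw [← hp0]
    exact ((hcont.tendsto 0).comp hinv).congr fun t => (hwp t).symm
  have h2 : Tendsto w atTop (𝓝 (w x)) :=
    tendsto_const_nhds.congr' (by filter_upwards [eventually_ge_atTop x] with t ht
                                  exact (hconst t ht).symm)
  exact tendsto_nhds_unique h2 h1

lemma sphH1_eq (n : ℕ) (x : ℝ) :
    sphH1 n (x : ℂ) = (-Complex.I) ^ (n + 1) * hkF Complex.I n x / x := by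
  have : ∑ m ∈ range (n + 1), Complex.I ^ m * ((Nat.factorial (n + m) : ℂ) /
        ((Nat.factorial m : ℂ) * (Nat.factorial (n - m) : ℂ) * (2 * (x : ℂ)) ^ m))
      = hkP Complex.I n (x : ℂ)⁻¹ := by
    refine sum_congr rfl fun m _ => ?_
    rw [hkCoeff, mul_pow, inv_pow]
    simp only [div_eq_mul_inv, mul_inv]
    ring
  rw [sphH1, this, hkF]
  ring

lemma sphH2_eq (n : ℕ) (x : ℝ) :
    sphH2 n (x : ℂ) = Complex.I ^ (n + 1) * hkF (-Complex.I) n x / x := by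
  have : ∑ m ∈ range (n + 1), (-Complex.I) ^ m * ((Nat.factorial (n + m) : ℂ) /
        ((Nat.factorial m : ℂ) * (Nat.factorial (n - m) : ℂ) * (2 * (x : ℂ)) ^ m))
      = hkP (-Complex.I) n (x : ℂ)⁻¹ := by
    refine sum_congr rfl fun m _ => ?_
    rw [hkCoeff, mul_pow, inv_pow]
    simp only [div_eq_mul_inv, mul_inv]
    ring
  rw [sphH2, this, hkF]
  ring

/-- `W_n` on the real axis is governed by a real solution of the Riccati–Bessel equation. -/
lemma exists_real_solution (n : ℕ) {κ a : ℝ} (hκ : 0 < κ) (ha : 0 < a) :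
    ∃ v v' : ℝ → ℝ, v a = 0 ∧ v' a = 1 ∧ (∀ t, 0 < t → HasDerivAt v (v' t) t) ∧
      (∀ t, 0 < t → HasDerivAt v' ((n * (n + 1) / t ^ 2 - κ ^ 2) * v t) t) ∧
      ∀ t, 0 < t → Wfun κ n a t = -2 * Complex.I / (κ * a) * ((v t / t : ℝ) : ℂ) := by
  set u : ℝ → ℂ := fun t => hkF Complex.I n (κ * a) * hkF (-Complex.I) n (κ * t) -
    hkF (-Complex.I) n (κ * a) * hkF Complex.I n (κ * t) with hu
  set u' : ℝ → ℂ := fun t => κ * (hkF Complex.I n (κ * a) * hkF' (-Complex.I) n (κ * t) -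
    hkF (-Complex.I) n (κ * a) * hkF' Complex.I n (κ * t)) with hu'
  have hκ' : (κ : ℂ) ≠ 0 := by exact_mod_cast hκ.ne'
  have hmul : ∀ t : ℝ, HasDerivAt (fun t : ℝ => κ * t) κ t := fun t => by
    simpa using (hasDerivAt_id t).const_mul κ
  have hdu : ∀ t, 0 < t → HasDerivAt u (u' t) t := by
    intro t ht
    have h0 : κ * t ≠ 0 := (mul_pos hκ ht).ne'
    convert! (((hasDerivAt_hkF (-Complex.I) n h0).scomp t (hmul t)).const_mul
      (hkF Complex.I n (κ * a))).sub (((hasDerivAt_hkF Complex.I n h0).scomp t (hmul t)).const_mul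
      (hkF (-Complex.I) n (κ * a))) using 1
    simp only [hu', Complex.real_smul]
    ring
  have hdu' : ∀ t, 0 < t →
      HasDerivAt u' (((n * (n + 1) / t ^ 2 - κ ^ 2 : ℝ) : ℂ) * u t) t := by
    intro t ht
    have h0 : κ * t ≠ 0 := (mul_pos hκ ht).ne'
    have i1 : Complex.I ^ 2 = -1 := Complex.I_sq
    have i2 : (-Complex.I) ^ 2 = -1 := by rw [neg_sq, i1]
    convert! ((((hasDerivAt_hkF' i2 n h0).scomp t (hmul t)).const_mul
      (hkF Complex.I n (κ * a))).sub (((hasDerivAt_hkF' i1 n h0).scomp t (hmul t)).const_mul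
      (hkF (-Complex.I) n (κ * a)))).const_mul (κ : ℂ) using 1
    have ht' : (t : ℂ) ≠ 0 := by exact_mod_cast ht.ne'
    simp only [hu, Complex.real_smul]
    push_cast
    field_simp
  -- `u` equals minus its complex conjugate, hence is purely imaginary.
  have him : ∀ t, u t = Complex.I * ((u t).im : ℂ) := by
    intro t
    have hc : (starRingEnd ℂ) (u t) = -u t := by
      simp only [hu, map_sub, map_mul, ← conj_hkF, Complex.conj_conj]
      ring
    have hre : (u t).re = 0 := by
      have := congrArg Complex.re hc
      simp only [Complex.conj_re, Complex.neg_re] at this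
      linarith
    apply Complex.ext <;> simp [hre]
  have key : ∀ {f : ℝ → ℂ} {f' : ℂ} {t : ℝ}, HasDerivAt f f' t →
      HasDerivAt (fun t => -(f t).im / (2 * κ)) (-f'.im / (2 * κ)) t := by
    intro f f' t h
    exact ((Complex.imCLM.hasFDerivAt.comp_hasDerivAt t h).neg).div_const _
  refine ⟨fun t => -(u t).im / (2 * κ), fun t => -(u' t).im / (2 * κ), ?_, ?_,
    fun t ht => key (hdu t ht), fun t ht => ?_, fun t ht => ?_⟩
  · have : u a = 0 := by simp only [hu]; ring
    simp [this]
  · have : u' a = κ * (-2 * Complex.I) := by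
      simp only [hu']
      rw [hkF_wronskian n (mul_pos hκ ha)]
    simp only [this]
    simp
    field_simp
  · convert! key (hdu' t ht) using 1
    rw [Complex.im_ofReal_mul]
    ring
  · have hI : (-Complex.I) ^ (n + 1) * Complex.I ^ (n + 1) = 1 := by
      rw [← mul_pow]; simp
    have ht' : (t : ℂ) ≠ 0 := by exact_mod_cast ht.ne'
    have ha' : (a : ℂ) ≠ 0 := by exact_mod_cast ha.ne'
    have hW : Wfun κ n a t = u t / (κ * a * (κ * t)) := by
      rw [Wfun, sphH1_eq, sphH1_eq, sphH2_eq, sphH2_eq]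
      simp only [hu]
      push_cast
      field_simp
      linear_combination (hkF Complex.I n (κ * a) * hkF (-Complex.I) n (κ * t) -
        hkF (-Complex.I) n (κ * a) * hkF Complex.I n (κ * t)) * hI
    rw [hW, him t]
    push_cast
    field_simp

/-! ### Comparison with powers -/

lemma le_of_hasDerivAt_nonneg {f f' : ℝ → ℝ} {a t : ℝ} (hat : a ≤ t)
    (hf : ∀ s ∈ Set.Icc a t, HasDerivAt f (f' s) s) (hf' : ∀ s ∈ Set.Icc a t, 0 ≤ f' s) :
    f a ≤ f t := by
  refine monotoneOn_of_deriv_nonneg (convex_Icc a t)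
    (fun s hs => (hf s hs).continuousAt.continuousWithinAt)
    (fun s hs => (hf s (interior_subset hs)).differentiableAt.differentiableWithinAt)
    (fun s hs => ?_) ⟨le_rfl, hat⟩ ⟨hat, le_rfl⟩ hat
  rw [(hf s (interior_subset hs)).deriv]
  exact hf' s (interior_subset hs)

/-- The solution is nonnegative where the potential is: `v v'` and then `v' ^ 2` are nondecreasing,
so `v'` never vanishes and keeps its initial sign. -/
lemma solution_nonneg {n : ℕ} {κ a b : ℝ} (ha : 0 < a) (hn : κ ^ 2 * b ^ 2 ≤ n * (n + 1))
    {v v' : ℝ → ℝ} (hva : v a = 0) (hva' : v' a = 1) (hv : ∀ t, 0 < t → HasDerivAt v (v' t) t)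
    (hv' : ∀ t, 0 < t → HasDerivAt v' ((n * (n + 1) / t ^ 2 - κ ^ 2) * v t) t)
    {t : ℝ} (hat : a ≤ t) (htb : t ≤ b) : 0 ≤ v t := by
  have hq : ∀ s, a ≤ s → s ≤ t → 0 ≤ n * (n + 1) / s ^ 2 - κ ^ 2 := by
    intro s h1 h2
    have hs : 0 < s := ha.trans_le h1
    rw [sub_nonneg, le_div_iff₀ (by positivity)]
    refine le_trans ?_ hn
    have : s ≤ b := h2.trans htb
    gcongr
  have h1 : ∀ s, a ≤ s → s ≤ t → 0 ≤ v s * v' s := by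
    intro s has hst
    have := le_of_hasDerivAt_nonneg (f := fun s => v s * v' s) has
      (fun r hr => (hv r (ha.trans_le hr.1)).mul (hv' r (ha.trans_le hr.1)))
      (fun r hr => by
        have := mul_nonneg (hq r hr.1 (hr.2.trans hst)) (mul_self_nonneg (v r))
        nlinarith [mul_self_nonneg (v' r)])
    simpa [hva] using this
  have h2 : ∀ s, a ≤ s → s ≤ t → 1 ≤ v' s ^ 2 := by
    intro s has hst
    have := le_of_hasDerivAt_nonneg (f := fun s => v' s ^ 2) has
      (fun r hr => (hv' r (ha.trans_le hr.1)).pow 2)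
      (fun r hr => by
        have := mul_nonneg (hq r hr.1 (hr.2.trans hst)) (h1 r hr.1 (hr.2.trans hst))
        norm_num
        nlinarith)
    simpa [hva'] using this
  have h3 : ∀ s, a ≤ s → s ≤ t → 0 ≤ v' s := by
    intro s has hst
    by_contra! hneg
    obtain ⟨r, hr, hr0⟩ := intermediate_value_Icc' has
      (fun r hr => (hv' r (ha.trans_le hr.1)).continuousAt.continuousWithinAt)
      (show (0 : ℝ) ∈ Set.Icc (v' s) (v' a) from ⟨hneg.le, by rw [hva']; norm_num⟩)
    have := h2 r hr.1 (hr.2.trans hst)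
    rw [hr0] at this
    norm_num at this
  rw [← hva]
  exact le_of_hasDerivAt_nonneg hat (fun r hr => hv r (ha.trans_le hr.1))
    (fun r hr => h3 r hr.1 hr.2)

/-- Comparison of the solution with `t ^ (n + 1)`, which solves the equation with `κ = 0`: the
Wronskian `v' t ^ (n + 1) - v (t ^ (n + 1))'` is first bounded above, which bounds `v` above, and
this in turn bounds the Wronskian, hence `v`, below. -/
lemma solution_bounds {n : ℕ} {κ a b : ℝ} (ha : 0 < a) (hn : κ ^ 2 * b ^ 2 ≤ n * (n + 1))
    {v v' : ℝ → ℝ} (hva : v a = 0) (hva' : v' a = 1) (hv : ∀ t, 0 < t → HasDerivAt v (v' t) t)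
    (hv' : ∀ t, 0 < t → HasDerivAt v' ((n * (n + 1) / t ^ 2 - κ ^ 2) * v t) t)
    {t : ℝ} (hat : a ≤ t) (htb : t ≤ b) :
    v t / t ^ (n + 1) ≤ (a ^ n)⁻¹ / (2 * n + 1) ∧
    (a ^ n)⁻¹ / (2 * n + 1) ≤ v t / t ^ (n + 1) + a ^ (n + 1) * (t ^ (2 * n + 1))⁻¹ / (2 * n + 1)
      + κ ^ 2 * (a ^ n)⁻¹ * t ^ 2 / (2 * (2 * n + 1) * (2 * n + 3)) := by
  have hnn : ∀ s, a ≤ s → s ≤ t → 0 ≤ v s := fun s h1 h2 =>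
    solution_nonneg ha hn hva hva' hv hv' h1 (h2.trans htb)
  set D : ℝ → ℝ := fun s => v' s * s ^ (n + 1) - v s * ((n + 1) * s ^ n) with hD
  have hpow : ∀ s : ℝ, HasDerivAt (fun s : ℝ => s ^ (n + 1)) ((n + 1) * s ^ n) s := fun s => by
    simpa using hasDerivAt_pow (n + 1) s
  have hpow' : ∀ s : ℝ, 0 < s →
      HasDerivAt (fun s : ℝ => ((n : ℝ) + 1) * s ^ n) ((n + 1) * (n * s ^ n / s)) s := fun s hs => by
    convert! (hasDerivAt_pow n s).const_mul ((n : ℝ) + 1) using 1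
    rcases n with _ | n
    · simp
    · simp only [Nat.add_sub_cancel]
      field_simp
      ring
  have hdD : ∀ s, 0 < s → HasDerivAt D (-(κ ^ 2 * v s * s ^ (n + 1))) s := by
    intro s hs
    convert! ((hv' s hs).mul (hpow s)).sub ((hv s hs).mul (hpow' s hs)) using 1
    field_simp
    ring
  have hDa : D a = a ^ (n + 1) := by simp [hD, hva, hva']
  have hD1 : ∀ s, a ≤ s → s ≤ t → D s ≤ a ^ (n + 1) := by
    intro s has hst
    have := le_of_hasDerivAt_nonneg (f := fun s => -D s) has
      (fun r hr => (hdD r (ha.trans_le hr.1)).neg) (fun r hr => by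
        have := hnn r hr.1 (hr.2.trans hst)
        have := ha.trans_le hr.1
        rw [neg_neg]
        positivity)
    simp only [hDa] at this
    linarith
  have hdq : ∀ s, 0 < s →
      HasDerivAt (fun s => v s / s ^ (n + 1)) (D s / (s ^ (n + 1)) ^ 2) s := fun s hs =>
    (hv s hs).div (hpow s) (by positivity)
  have hdi : ∀ s, 0 < s → HasDerivAt
      (fun s : ℝ => a ^ (n + 1) * (s ^ (2 * n + 1))⁻¹ / (2 * n + 1))
      (-(a ^ (n + 1) / (s ^ (n + 1)) ^ 2)) s := fun s hs => by
    convert! ((((hasDerivAt_pow (2 * n + 1) s).inv (by positivity)).const_mul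
      (a ^ (n + 1))).div_const (2 * (n : ℝ) + 1)) using 1
    simp only [Nat.add_sub_cancel]
    push_cast
    field_simp
    ring
  have hE : a ^ (n + 1) * (a ^ (2 * n + 1))⁻¹ / (2 * n + 1) = (a ^ n)⁻¹ / (2 * n + 1) := by
    field_simp
    ring
  have hup : ∀ s, a ≤ s → s ≤ t →
      v s / s ^ (n + 1) + a ^ (n + 1) * (s ^ (2 * n + 1))⁻¹ / (2 * n + 1)
        ≤ (a ^ n)⁻¹ / (2 * n + 1) := by
    intro s has hst
    have := le_of_hasDerivAt_nonneg has
      (fun r hr => ((hdq r (ha.trans_le hr.1)).add (hdi r (ha.trans_le hr.1))).neg)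
      (fun r hr => by
        have h1 := hD1 r hr.1 (hr.2.trans hst)
        have h2 := ha.trans_le hr.1
        rw [neg_add, neg_neg, neg_add_eq_sub, ← sub_div]
        exact div_nonneg (by linarith) (by positivity))
    simp only [Pi.neg_apply, Pi.add_apply, hva, hE, zero_div, zero_add] at this
    linarith
  have hup' : ∀ s, a ≤ s → s ≤ t → v s / s ^ (n + 1) ≤ (a ^ n)⁻¹ / (2 * n + 1) := by
    intro s has hst
    have h1 := hup s has hst
    have h2 := ha.trans_le has
    have : 0 ≤ a ^ (n + 1) * (s ^ (2 * n + 1))⁻¹ / (2 * n + 1) := by positivity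
    linarith
  refine ⟨hup' t hat le_rfl, ?_⟩
  have hdG : ∀ s : ℝ, 0 < s → HasDerivAt
      (fun s : ℝ => κ ^ 2 * (a ^ n)⁻¹ * s ^ (2 * n + 3) / ((2 * n + 1) * (2 * n + 3)))
      (κ ^ 2 * (a ^ n)⁻¹ * (s ^ (n + 1)) ^ 2 / (2 * n + 1)) s := fun s hs => by
    convert! ((hasDerivAt_pow (2 * n + 3) s).const_mul
      (κ ^ 2 * (a ^ n)⁻¹)).div_const ((2 * (n : ℝ) + 1) * (2 * n + 3)) using 1
    have : 2 * n + 3 - 1 = 2 * n + 2 := rfl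
    rw [this]
    push_cast
    field_simp
    ring
  have hD2 : ∀ s, a ≤ s → s ≤ t → a ^ (n + 1) ≤
      D s + κ ^ 2 * (a ^ n)⁻¹ * s ^ (2 * n + 3) / ((2 * n + 1) * (2 * n + 3)) := by
    intro s has hst
    have := le_of_hasDerivAt_nonneg has
      (fun r hr => (hdD r (ha.trans_le hr.1)).add (hdG r (ha.trans_le hr.1)))
      (fun r hr => by
        have h1 := hup' r hr.1 (hr.2.trans hst)
        have h2 := ha.trans_le hr.1
        rw [div_le_iff₀ (by positivity)] at h1
        have h3 : κ ^ 2 * r ^ (n + 1) * v r ≤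
            κ ^ 2 * r ^ (n + 1) * ((a ^ n)⁻¹ / (2 * n + 1) * r ^ (n + 1)) := by gcongr
        have h4 : κ ^ 2 * (a ^ n)⁻¹ * (r ^ (n + 1)) ^ 2 / (2 * n + 1) =
          κ ^ 2 * r ^ (n + 1) * ((a ^ n)⁻¹ / (2 * n + 1) * r ^ (n + 1)) := by ring
        rw [h4]
        linarith)
    simp only [Pi.add_apply, hDa] at this
    have h0 : 0 ≤ κ ^ 2 * (a ^ n)⁻¹ * a ^ (2 * n + 3) / ((2 * n + 1) * (2 * n + 3)) := by
      positivity
    linarith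
  have hdH : ∀ s : ℝ, HasDerivAt
      (fun s : ℝ => κ ^ 2 * (a ^ n)⁻¹ * s ^ 2 / (2 * (2 * n + 1) * (2 * n + 3)))
      (κ ^ 2 * (a ^ n)⁻¹ * s / ((2 * n + 1) * (2 * n + 3))) s := fun s => by
    convert! ((hasDerivAt_pow 2 s).const_mul
      (κ ^ 2 * (a ^ n)⁻¹)).div_const (2 * (2 * (n : ℝ) + 1) * (2 * n + 3)) using 1
    norm_num
    field_simp
  have := le_of_hasDerivAt_nonneg hat
    (fun r hr => ((hdq r (ha.trans_le hr.1)).add (hdi r (ha.trans_le hr.1))).add (hdH r))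
    (fun r hr => by
      have h1 := hD2 r hr.1 hr.2
      have h2 := ha.trans_le hr.1
      have h3 : D r / (r ^ (n + 1)) ^ 2 + -(a ^ (n + 1) / (r ^ (n + 1)) ^ 2) +
          κ ^ 2 * (a ^ n)⁻¹ * r / ((2 * n + 1) * (2 * n + 3)) =
          (D r + κ ^ 2 * (a ^ n)⁻¹ * r ^ (2 * n + 3) / ((2 * n + 1) * (2 * n + 3))
            - a ^ (n + 1)) / (r ^ (n + 1)) ^ 2 := by
        field_simp
        ring
      rw [h3]
      exact div_nonneg (by linarith) (by positivity))
  simp only [Pi.add_apply, hva, hE, zero_div, zero_add] at this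
  refine le_trans (le_add_of_nonneg_right ?_) this
  positivity

/-- Two-sided bounds for the normalised integral of `v t / t`. -/
lemma integral_bounds {n : ℕ} {κ a b : ℝ} (ha : 0 < a) (hab : a < b)
    (hn : κ ^ 2 * b ^ 2 ≤ n * (n + 1))
    {v v' : ℝ → ℝ} (hva : v a = 0) (hva' : v' a = 1) (hv : ∀ t, 0 < t → HasDerivAt v (v' t) t)
    (hv' : ∀ t, 0 < t → HasDerivAt v' ((n * (n + 1) / t ^ 2 - κ ^ 2) * v t) t) :
    (2 * n + 1) * (n + 1) / a * (a / b) ^ (n + 1) * (∫ t in a..b, v t / t) ≤ 1 ∧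
    (1 - (a / b) ^ (n + 1)) * (1 - κ ^ 2 * b ^ 2 / (2 * (2 * n + 3)))
      - (n + 1) * (a / b) ^ (n + 1) * ((b - a) / a) ≤
    (2 * n + 1) * (n + 1) / a * (a / b) ^ (n + 1) * (∫ t in a..b, v t / t) := by
  have hb : 0 < b := ha.trans hab
  have hint : IntervalIntegrable (fun t => v t / t) MeasureTheory.volume a b := by
    refine ContinuousOn.intervalIntegrable fun t ht => ?_
    rw [Set.uIcc_of_le hab.le] at ht
    have ht0 : 0 < t := ha.trans_le ht.1
    exact ((hv t ht0).continuousAt.div continuousAt_id ht0.ne').continuousWithinAt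
  have hJ : ∀ c d : ℝ, ∫ t in a..b, (c * t ^ n - d) =
      c * ((b ^ (n + 1) - a ^ (n + 1)) / (n + 1)) - (b - a) * d := by
    intro c d
    rw [intervalIntegral.integral_sub (Continuous.intervalIntegrable (by fun_prop) _ _)
      (by simp), intervalIntegral.integral_const_mul, integral_pow]
    simp
  have hJi : ∀ c d : ℝ, IntervalIntegrable (fun t => c * t ^ n - d) MeasureTheory.volume a b :=
    fun c d => Continuous.intervalIntegrable (by fun_prop) _ _
  set c : ℝ := (a ^ n)⁻¹ / (2 * n + 1) with hc
  set δ : ℝ := κ ^ 2 * b ^ 2 / (2 * (2 * n + 3)) with hδ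
  have hup : ∫ t in a..b, v t / t ≤ ∫ t in a..b, (c * t ^ n - 0) := by
    refine intervalIntegral.integral_mono_on hab.le hint (hJi _ _) fun t ht => ?_
    have ht0 : 0 < t := ha.trans_le ht.1
    have := (solution_bounds ha hn hva hva' hv hv' ht.1 ht.2).1
    rw [div_le_iff₀ (by positivity)] at this ⊢
    rw [pow_succ] at this
    linarith
  have hlo : ∫ t in a..b, (c * (1 - δ) * t ^ n - 1 / (2 * n + 1)) ≤ ∫ t in a..b, v t / t := by
    refine intervalIntegral.integral_mono_on hab.le (hJi _ _) hint fun t ht => ?_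
    have ht0 : 0 < t := ha.trans_le ht.1
    have h1 := (solution_bounds ha hn hva hva' hv hv' ht.1 ht.2).2
    have h2 : κ ^ 2 * (a ^ n)⁻¹ * t ^ 2 / (2 * (2 * n + 1) * (2 * n + 3)) ≤ c * δ := by
      have : c * δ = κ ^ 2 * (a ^ n)⁻¹ * b ^ 2 / (2 * (2 * n + 1) * (2 * n + 3)) := by
        rw [hc, hδ]; field_simp
      rw [this]
      have := ht.2
      gcongr
    have h3 : t ^ n * (a ^ (n + 1) * (t ^ (2 * n + 1))⁻¹ / (2 * n + 1)) ≤ 1 / (2 * n + 1) := by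
      have : t ^ n * (a ^ (n + 1) * (t ^ (2 * n + 1))⁻¹ / (2 * n + 1)) =
          (a / t) ^ (n + 1) / (2 * n + 1) := by
        rw [div_pow]; field_simp; ring
      rw [this]
      gcongr
      exact pow_le_one₀ (by positivity) ((div_le_one ht0).2 ht.1)
    have h4 : v t / t = t ^ n * (v t / t ^ (n + 1)) := by
      field_simp
      ring
    have h5 : 0 < t ^ n := by positivity
    have h6 := mul_le_mul_of_nonneg_left (h1.trans (add_le_add_right h2 _)) h5.le
    rw [h4]
    nlinarith
  rw [hJ] at hup hlo
  set M : ℝ := (2 * n + 1) * (n + 1) / a * (a / b) ^ (n + 1) with hM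
  have hM0 : 0 ≤ M := by positivity
  have e1 : M * (c * ((b ^ (n + 1) - a ^ (n + 1)) / (n + 1))) = 1 - (a / b) ^ (n + 1) := by
    rw [hM, hc, div_pow]
    field_simp
    ring
  have e2 : M * ((b - a) * (1 / (2 * n + 1))) =
      (n + 1) * (a / b) ^ (n + 1) * ((b - a) / a) := by
    rw [hM]
    field_simp
  constructor
  · have := mul_le_mul_of_nonneg_left hup hM0
    have h0 : 0 ≤ (a / b) ^ (n + 1) := by positivity
    nlinarith
  · have := mul_le_mul_of_nonneg_left hlo hM0
    rw [← e1, ← e2]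
    linarith

/-! ### The limit -/

/-- for `κ > 0` and `0 < R' < R`,
`∫_{R'}^{R} W_n(R', t) dt ∼ −(2i/((2n+1)(n+1)κ))·(R/R')^{n+1}` as `n → ∞`,
in the sense that the quotient tends to `1`. -/
theorem stmt15 (κ R' R : ℝ) (hκ : 0 < κ) (hR' : 0 < R') (hRR : R' < R) :
    Filter.Tendsto
      (fun n : ℕ =>
        (∫ t in R'..R, Wfun κ n R' t) /
          ((-2 * Complex.I / ((2 * (n : ℂ) + 1) * ((n : ℂ) + 1) * (κ : ℂ))) *
            ((R / R' : ℝ) : ℂ) ^ (n + 1)))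
      Filter.atTop (nhds 1) := by
  have hR : 0 < R := hR'.trans hRR
  choose v v' hva hva' hv hv' hW using fun n : ℕ => exists_real_solution n hκ hR'
  set r : ℕ → ℝ := fun n =>
    (2 * n + 1) * (n + 1) / R' * (R' / R) ^ (n + 1) * (∫ t in R'..R, v n t / t) with hr
  have heq : ∀ n : ℕ, (r n : ℂ) = (∫ t in R'..R, Wfun κ n R' t) /
          ((-2 * Complex.I / ((2 * (n : ℂ) + 1) * ((n : ℂ) + 1) * (κ : ℂ))) *
            ((R / R' : ℝ) : ℂ) ^ (n + 1)) := by
    intro n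
    have h1 : ∫ t in R'..R, Wfun κ n R' t =
        -2 * Complex.I / (κ * R') * ((∫ t in R'..R, v n t / t : ℝ) : ℂ) := by
      rw [← intervalIntegral.integral_ofReal, ← intervalIntegral.integral_const_mul]
      refine intervalIntegral.integral_congr fun t ht => ?_
      rw [Set.uIcc_of_le hRR.le] at ht
      exact hW n t (hR'.trans_le ht.1)
    have c1 : (κ : ℂ) ≠ 0 := by exact_mod_cast hκ.ne'
    have c2 : (R' : ℂ) ≠ 0 := by exact_mod_cast hR'.ne'
    have c3 : (R : ℂ) ≠ 0 := by exact_mod_cast hR.ne'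
    have c4 : 2 * (n : ℂ) + 1 ≠ 0 := by exact_mod_cast (2 * n).succ_ne_zero
    have c5 : (n : ℂ) + 1 ≠ 0 := by exact_mod_cast n.succ_ne_zero
    have c6 := Complex.I_ne_zero
    rw [h1]
    simp only [hr]
    push_cast
    rw [div_pow, div_pow]
    field_simp
  have hlim : Tendsto r atTop (𝓝 1) := by
    have hq0 : 0 ≤ R' / R := by positivity
    have hq1 : R' / R < 1 := (div_lt_one hR).2 hRR
    have l1 : Tendsto (fun n : ℕ => (R' / R) ^ (n + 1)) atTop (𝓝 0) :=
      (tendsto_pow_atTop_nhds_zero_of_lt_one hq0 hq1).comp (tendsto_add_atTop_nat 1)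
    have l2 : Tendsto (fun n : ℕ => ((n : ℝ) + 1) * (R' / R) ^ (n + 1)) atTop (𝓝 0) := by
      have := (tendsto_self_mul_const_pow_of_lt_one hq0 hq1).comp (tendsto_add_atTop_nat 1)
      simpa [Function.comp_def] using this
    have l3 : Tendsto (fun n : ℕ => κ ^ 2 * R ^ 2 / (2 * (2 * (n : ℝ) + 3))) atTop (𝓝 0) := by
      refine tendsto_const_nhds.div_atTop ?_
      refine Tendsto.const_mul_atTop (by norm_num) (tendsto_atTop_add_const_right _ _ ?_)
      exact tendsto_natCast_atTop_atTop.const_mul_atTop (by norm_num)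
    have llo : Tendsto (fun n : ℕ => (1 - (R' / R) ^ (n + 1)) *
        (1 - κ ^ 2 * R ^ 2 / (2 * (2 * (n : ℝ) + 3)))
        - (n + 1) * (R' / R) ^ (n + 1) * ((R - R') / R')) atTop (𝓝 1) := by
      have := ((l1.const_sub 1).mul (l3.const_sub 1)).sub (l2.mul_const ((R - R') / R'))
      simpa using this
    have hbig : ∀ᶠ n : ℕ in atTop, κ ^ 2 * R ^ 2 ≤ n * (n + 1) := by
      filter_upwards [tendsto_natCast_atTop_atTop.eventually_ge_atTop (κ ^ 2 * R ^ 2)] with n hn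
      have : (0 : ℝ) ≤ n := n.cast_nonneg
      nlinarith
    refine tendsto_of_tendsto_of_tendsto_of_le_of_le' llo tendsto_const_nhds ?_ ?_
    · filter_upwards [hbig] with n hn
      exact (integral_bounds hR' hRR hn (hva n) (hva' n) (hv n) (hv' n)).2
    · filter_upwards [hbig] with n hn
      exact (integral_bounds hR' hRR hn (hva n) (hva' n) (hv n) (hv' n)).1
  have := (Complex.continuous_ofReal.tendsto 1).comp hlim
  rw [Complex.ofReal_one] at this
  exact this.congr heq
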